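/- Let f : S^{n−1} → (0,∞) and φ : (0,∞) → (0,∞) be smooth, and suppose ℜ : (0,∞) → (0,∞) is given by ℜ(s) = ∫ₛ^∞ dt/(t φ(t)) (finite for all s > 0), so that ℜ is strictly decreasing. Then along any smooth, origin-symmetric, strictly convex solution of the flow on [0,T), the functional P(t) = ∫_{S^{n−1}} ℜ(1/h(x,t)) f(x) dx is non-increasing in t. -/

import Mathlib

/-!
Writing `h = H t`, `g = f/φ(1/h)` and `ρ = radTerm = ‖∇h‖`, the chain rule with
`R'(s) = -1/(s φ(s))` and the flow equation give
`P'(t) = ∫ g - η ∫ g² ρⁿ/(h det)`, where `η = |S^{n-1}|/∫ g`. By Cauchy-Schwarz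
`(∫ g)² ≤ ∫ g² ρⁿ/(h det) · ∫ h det/ρⁿ`, so `P' ≤ 0` follows from the area inequality
`∫ h det/ρⁿ ≤ |S^{n-1}|` (`IsSupportFn.lintegral_le_sphMeasure_univ`,
`integral_flow_nonpos`).

The integrand `h det/ρⁿ` is the Jacobian of the map `x ↦ ∇h/‖∇h‖` of the sphere, so only
injectivity is needed. It is convenient to use instead the `1`-homogeneous map
`G(x) = ‖x‖ ∇h(x)`: it is injective on `ℝⁿ ∖ 0` by the strict support inequality
`⟪∇h(v), u⟫ < h(u)` for unit vectors `u ≠ v` (`IsSupportFn.inner_gradient_lt`), its Jacobian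
is the `0`-homogeneous function `h det`, and the part of its image lying in the unit ball has volume
at most `|S^{n-1}|/n`. The change of variables formula in polar coordinates on
`{‖G(x)‖ < 1}` then yields the inequality.

Differentiation under the integral sign on `(0, T)` uses that the time derivative is jointly
continuous, hence bounded on compact subintervals times the sphere; at `t = 0` continuity of `P`
suffices.
-/


noncomputable section

open Metric MeasureTheory Set Filter Topology
open scoped RealInnerProductSpace NNReal

/-- Abbreviation for `n`-dimensional Euclidean space. -/
abbrev Euc (n : ℕ) : Type := EuclideanSpace ℝ (Fin n)

/-- The unit sphere `S^{n-1}` in `ℝⁿ`, as a set. -/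
abbrev USphere (n : ℕ) : Set (Euc n) := Metric.sphere (0 : Euc n) 1

/-- The surface (spherical Lebesgue) measure on the unit sphere. -/
def sphMeasure (n : ℕ) : Measure (USphere n) :=
  (volume : Measure (Euc n)).toSphere

/-- Total surface measure `|S^{n-1}|` of the unit sphere. -/
def sphArea (n : ℕ) : ℝ := (sphMeasure n Set.univ).toReal

/-- Integral over the unit sphere with respect to the spherical Lebesgue measure. -/
def sphInt (n : ℕ) (g : Euc n → ℝ) : ℝ :=
  ∫ x : USphere n, g x ∂(sphMeasure n)

/-- The covariant (spherical) gradient on `S^{n-1}` of the restriction of `F`,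
i.e. the tangential component of the Euclidean gradient of `F`. -/
def sphGrad (n : ℕ) (F : Euc n → ℝ) (x : Euc n) : Euc n :=
  gradient F x - ⟪gradient F x, x⟫ • x

/-- `√(|∇h|² + h²)` for the (1-homogeneous extension of the) function `F` at `x`. -/
def radTerm (n : ℕ) (F : Euc n → ℝ) (x : Euc n) : ℝ :=
  Real.sqrt (‖sphGrad n F x‖ ^ 2 + F x ^ 2)

/-- The Euclidean Hessian operator of `F` at `x`. For a positively 1-homogeneous `F`
this operator kills `x` and restricts on `x^⊥` to the matrix `∇²h + hI` of the
spherical Hessian. -/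
def hessOp (n : ℕ) (F : Euc n → ℝ) (x : Euc n) : Euc n →L[ℝ] Euc n :=
  fderiv ℝ (gradient F) x

/-- `det(∇²h + hI)` at `x ∈ S^{n-1}`: the determinant of the restriction of the Euclidean
Hessian of the 1-homogeneous extension to `x^⊥`, computed as the determinant of
`Hess F + x ⊗ x` on all of `ℝⁿ` (the Hessian of a 1-homogeneous function kills `x`). -/
def sphDet (n : ℕ) (F : Euc n → ℝ) (x : Euc n) : ℝ :=
  LinearMap.det
    ((hessOp n F x + (innerSL ℝ x).smulRight x : Euc n →L[ℝ] Euc n) : Euc n →ₗ[ℝ] Euc n)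

/-- `F` is the (1-homogeneously extended) support function of a smooth strictly convex
body with the origin in its interior: it is smooth away from the origin, positively
1-homogeneous, positive, and `∇²h + hI` is positive definite on each tangent space. -/
structure IsSupportFn (n : ℕ) (F : Euc n → ℝ) : Prop where
  smooth : ContDiffOn ℝ (⊤ : ℕ∞) F {(0 : Euc n)}ᶜ
  homog : ∀ c : ℝ, 0 < c → ∀ x : Euc n, F (c • x) = c * F x
  pos : ∀ x ∈ USphere n, 0 < F x
  posdef : ∀ x ∈ USphere n, ∀ v : Euc n, v ≠ 0 → ⟪x, v⟫ = 0 →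
    0 < ⟪v, hessOp n F x v⟫

/-- The convex body determined by the support function `F`. -/
def bodyOf (n : ℕ) (F : Euc n → ℝ) : Set (Euc n) :=
  {y | ∀ x ∈ USphere n, ⟪x, y⟫ ≤ F x}

/-- The radial function of the convex body with support function `F`. -/
def radialFn (n : ℕ) (F : Euc n → ℝ) (u : Euc n) : ℝ :=
  sSup {r : ℝ | 0 < r ∧ r • u ∈ bodyOf n F}

/-- The normalization factor `η` of the flow. -/
def flowEta (n : ℕ) (f : Euc n → ℝ) (φ : ℝ → ℝ) (h : Euc n → ℝ) : ℝ :=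
  sphArea n / sphInt n (fun x => f x / φ (1 / h x))

/-- `H : ℝ → Euc n → ℝ` is (the family of support functions of) a smooth, origin-symmetric,
strictly convex solution of the flow on the time interval `J`. -/
structure IsFlowSol (n : ℕ) (f : Euc n → ℝ) (φ : ℝ → ℝ) (J : Set ℝ)
    (H : ℝ → Euc n → ℝ) : Prop where
  smooth : ContDiffOn ℝ (⊤ : ℕ∞) (fun p : ℝ × Euc n => H p.1 p.2) (J ×ˢ {(0 : Euc n)}ᶜ)
  body : ∀ t ∈ J, IsSupportFn n (H t)
  symm : ∀ t ∈ J, ∀ x : Euc n, H t (-x) = H t x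
  eqn : ∀ t ∈ J, ∀ x ∈ USphere n,
    HasDerivWithinAt (fun s => H s x)
      (H t x - flowEta n f φ (H t) * f x * radTerm n (H t) x ^ n /
        (φ (1 / H t x) * sphDet n (H t) x)) J t

/-- Condition (i) of the Orlicz-Aleksandrov flow theorem. -/
def CondI (n : ℕ) (f : Euc n → ℝ) (φ : ℝ → ℝ) (h₀ : Euc n → ℝ) : Prop :=
  ∃ R : ℝ → ℝ, (∀ s ∈ Ioi (0 : ℝ), 0 < R s) ∧ StrictMonoOn R (Ioi 0) ∧
    Tendsto R (𝓝[>] (0 : ℝ)) (𝓝 0) ∧ Tendsto R atTop atTop ∧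
    (∀ s ∈ Ioi (0 : ℝ), IntegrableOn (fun t => 1 / (t * φ t)) (Ioo 0 s) ∧
      R s = ∫ t in Ioo (0 : ℝ) s, 1 / (t * φ t)) ∧
    (∀ s ∈ Ioi (0 : ℝ), HasDerivAt R (1 / (s * φ s)) s ∧ 1 / (s * φ s) ≠ 0) ∧
    ∃ Chat : ℝ, 0 < Chat ∧
      (∀ θ ∈ USphere n,
        sphInt n (fun x => f x * R (1 / |⟪x, θ⟫|)) ≤ Chat) ∧
      Chat < sphInt n (fun x => f x * R (1 / h₀ x))

/-- Condition (ii) of the Orlicz-Aleksandrov flow theorem. -/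
def CondII (φ : ℝ → ℝ) : Prop :=
  ∃ R : ℝ → ℝ, (∀ s ∈ Ioi (0 : ℝ), 0 < R s) ∧ StrictAntiOn R (Ioi 0) ∧
    Tendsto R (𝓝[>] (0 : ℝ)) atTop ∧ Tendsto R atTop (𝓝 0) ∧
    (∀ s ∈ Ioi (0 : ℝ), IntegrableOn (fun t => 1 / (t * φ t)) (Ioi s) ∧
      R s = ∫ t in Ioi s, 1 / (t * φ t)) ∧
    (∀ s ∈ Ioi (0 : ℝ), HasDerivAt R (-(1 / (s * φ s))) s ∧ 1 / (s * φ s) ≠ 0)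

/-! ### Homogeneity and strict convexity of support functions -/

section SupportFn

variable {n : ℕ} {F : Euc n → ℝ}

lemma compl_zero_mem_nhds {x : Euc n} (hx : x ≠ 0) : ({(0 : Euc n)}ᶜ : Set (Euc n)) ∈ 𝓝 x :=
  isOpen_compl_singleton.mem_nhds hx

lemma ne_zero_of_mem_uSphere {x : Euc n} (hx : x ∈ USphere n) : x ≠ 0 :=
  ne_zero_of_mem_unit_sphere (⟨x, hx⟩ : USphere n)

lemma norm_of_mem_uSphere {x : Euc n} (hx : x ∈ USphere n) : ‖x‖ = 1 := by
  simpa using hx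

lemma gradient_eq_toDual_symm (F : Euc n → ℝ) :
    gradient F = fun x => (InnerProductSpace.toDual ℝ (Euc n)).symm (fderiv ℝ F x) := rfl

namespace IsSupportFn

lemma contDiffAt (hF : IsSupportFn n F) {x : Euc n} (hx : x ≠ 0) :
    ContDiffAt ℝ (⊤ : ℕ∞) F x :=
  hF.smooth.contDiffAt (compl_zero_mem_nhds hx)

lemma hasFDerivAt (hF : IsSupportFn n F) {x : Euc n} (hx : x ≠ 0) :
    HasFDerivAt F (innerSL ℝ (gradient F x)) x := by
  have h := ((hF.contDiffAt hx).differentiableAt (by simp)).hasGradientAt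
  exact h.hasFDerivAt

lemma contDiffAt_gradient (hF : IsSupportFn n F) {x : Euc n} (hx : x ≠ 0) :
    ContDiffAt ℝ (⊤ : ℕ∞) (gradient F) x := by
  rw [gradient_eq_toDual_symm]
  have h : ContDiffAt ℝ (⊤ : ℕ∞) (fderiv ℝ F) x :=
    (hF.contDiffAt hx).fderiv_right (by simp)
  exact ((InnerProductSpace.toDual ℝ (Euc n)).symm.toContinuousLinearEquiv.contDiff.contDiffAt).comp
    x h

lemma hasFDerivAt_gradient (hF : IsSupportFn n F) {x : Euc n} (hx : x ≠ 0) :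
    HasFDerivAt (gradient F) (hessOp n F x) x :=
  ((hF.contDiffAt_gradient hx).differentiableAt (by simp)).hasFDerivAt

lemma continuousAt_hessOp (hF : IsSupportFn n F) {x : Euc n} (hx : x ≠ 0) :
    ContinuousAt (hessOp n F) x :=
  ((hF.contDiffAt_gradient hx).fderiv_right (m := (⊤ : ℕ∞)) (by simp)).continuousAt

/-- The gradient of a `1`-homogeneous function is `0`-homogeneous. -/
lemma gradient_smul (hF : IsSupportFn n F) {c : ℝ} (hc : 0 < c) {x : Euc n} (hx : x ≠ 0) :
    gradient F (c • x) = gradient F x := by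
  have hcx : c • x ≠ 0 := smul_ne_zero hc.ne' hx
  have h1 : HasFDerivAt (fun y : Euc n => F (c • y)) (c • innerSL ℝ (gradient F (c • x))) x := by
    have h := (hF.hasFDerivAt hcx).comp x ((hasFDerivAt_id x).const_smul c)
    refine h.congr_fderiv ?_
    ext v
    simp
  have h2 : HasFDerivAt (fun y : Euc n => F (c • y)) (c • innerSL ℝ (gradient F x)) x := by
    have : (fun y : Euc n => F (c • y)) = fun y => c * F y := by
      ext y; exact hF.homog c hc y
    rw [this]
    simpa using (hF.hasFDerivAt hx).const_mul c
  have h3 := h1.unique h2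
  refine ext_inner_right ℝ fun v => ?_
  have h4 := congrArg (fun L : Euc n →L[ℝ] ℝ => L v) h3
  simpa [hc.ne'] using h4

/-- Euler's identity for the `1`-homogeneous function `F`. -/
lemma inner_gradient_self (hF : IsSupportFn n F) {x : Euc n} (hx : x ≠ 0) :
    ⟪gradient F x, x⟫ = F x := by
  have h1 : HasDerivAt (fun c : ℝ => F (c • x)) ⟪gradient F x, x⟫ 1 := by
    have hx1 : (1 : ℝ) • x ≠ 0 := by simpa using hx
    have h := (hF.hasFDerivAt hx1).comp_hasDerivAt (1 : ℝ)
      ((hasDerivAt_id (1 : ℝ)).smul_const x)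
    simpa [Function.comp_def] using h
  have h2 : HasDerivAt (fun c : ℝ => F (c • x)) (F x) 1 := by
    have h : HasDerivAt (fun c : ℝ => c * F x) (F x) 1 := by
      simpa using (hasDerivAt_id (1 : ℝ)).mul_const (F x)
    refine h.congr_of_eventuallyEq ?_
    filter_upwards [Ioi_mem_nhds (zero_lt_one' ℝ)] with c hc
    exact hF.homog c hc x
  exact h1.unique h2

/-- The Hessian of a `1`-homogeneous function kills the radial direction. -/
lemma hessOp_self (hF : IsSupportFn n F) {x : Euc n} (hx : x ≠ 0) : hessOp n F x x = 0 := by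
  have h1 : HasDerivAt (fun c : ℝ => gradient F (c • x)) (hessOp n F x x) 1 := by
    have hx1 : (1 : ℝ) • x ≠ 0 := by simpa using hx
    have h := (hF.hasFDerivAt_gradient hx1).comp_hasDerivAt (1 : ℝ)
      ((hasDerivAt_id (1 : ℝ)).smul_const x)
    simpa [Function.comp_def] using h
  have h2 : HasDerivAt (fun c : ℝ => gradient F (c • x)) 0 1 := by
    refine (hasDerivAt_const (1 : ℝ) (gradient F x)).congr_of_eventuallyEq ?_
    filter_upwards [Ioi_mem_nhds (zero_lt_one' ℝ)] with c hc
    exact hF.gradient_smul hc hx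
  exact h1.unique h2

/-- The range of the Hessian at `x` is orthogonal to `x`; this is Euler's identity differentiated,
and needs no symmetry of second derivatives. -/
lemma inner_hessOp_apply_self (hF : IsSupportFn n F) {x : Euc n} (hx : x ≠ 0) (v : Euc n) :
    ⟪hessOp n F x v, x⟫ = 0 := by
  have h1 := (hF.hasFDerivAt_gradient hx).inner ℝ (hasFDerivAt_id x)
  have h2 : HasFDerivAt (fun y => ⟪gradient F y, id y⟫) (innerSL ℝ (gradient F x)) x := by
    refine (hF.hasFDerivAt hx).congr_of_eventuallyEq ?_
    filter_upwards [compl_zero_mem_nhds hx] with y hy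
    exact hF.inner_gradient_self hy
  have h3 := congrArg (fun L : Euc n →L[ℝ] ℝ => L v) (h1.unique h2)
  simpa using h3

lemma hessOp_smul (hF : IsSupportFn n F) {c : ℝ} (hc : 0 < c) {x : Euc n} (hx : x ≠ 0) :
    c • hessOp n F (c • x) = hessOp n F x := by
  have hcx : c • x ≠ 0 := smul_ne_zero hc.ne' hx
  have h1 : HasFDerivAt (fun y : Euc n => gradient F (c • y)) (c • hessOp n F (c • x)) x := by
    have h := (hF.hasFDerivAt_gradient hcx).comp x ((hasFDerivAt_id x).const_smul c)
    refine h.congr_fderiv ?_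
    ext v
    simp
  refine h1.unique ((hF.hasFDerivAt_gradient hx).congr_of_eventuallyEq ?_)
  filter_upwards [compl_zero_mem_nhds hx] with y hy
  exact hF.gradient_smul hc hy

/-- Positivity of the Hessian at every nonzero point, in every non-radial direction. -/
lemma hessOp_pos (hF : IsSupportFn n F) {x : Euc n} (hx : x ≠ 0) {v : Euc n}
    (hv : ∀ c : ℝ, v ≠ c • x) : 0 < ⟪v, hessOp n F x v⟫ := by
  have hr : 0 < ‖x‖ := norm_pos_iff.2 hx
  set u : Euc n := ‖x‖⁻¹ • x with hu
  have hu0 : u ≠ 0 := smul_ne_zero (inv_ne_zero hr.ne') hx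
  have huS : u ∈ USphere n := by
    simp [hu, norm_smul, hr.ne']
  have hun : ‖u‖ = 1 := norm_of_mem_uSphere huS
  have hxu : ‖x‖ • u = x := by simp [hu, smul_smul, hr.ne']
  have hH : hessOp n F u = ‖x‖ • hessOp n F x := by
    have := hF.hessOp_smul hr hu0
    rw [hxu] at this
    exact this.symm
  set w : Euc n := v - ⟪u, v⟫ • u with hw
  have hw0 : w ≠ 0 := by
    intro h
    refine hv (⟪u, v⟫ * ‖x‖⁻¹) ?_
    rw [mul_smul, ← hu]
    exact sub_eq_zero.1 h
  have huw : ⟪u, w⟫ = 0 := by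
    rw [hw, inner_sub_right, inner_smul_right, real_inner_self_eq_norm_sq, hun]; ring
  have hpos := hF.posdef u huS w hw0 huw
  have hvw : v = w + ⟪u, v⟫ • u := by rw [hw]; abel
  have e1 : hessOp n F u v = hessOp n F u w := by
    conv_lhs => rw [hvw]
    rw [map_add, map_smul, hF.hessOp_self hu0, smul_zero, add_zero]
  have e2 : ⟪v, hessOp n F u v⟫ = ⟪w, hessOp n F u w⟫ := by
    rw [e1]
    conv_lhs => rw [hvw]
    rw [inner_add_left, inner_smul_left,
      real_inner_comm (hessOp n F u w) u,
      hF.inner_hessOp_apply_self hu0, mul_zero, add_zero]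
  rw [← e2, hH, smul_apply, inner_smul_right] at hpos
  exact pos_of_mul_pos_right hpos hr.le

/-- Strict support inequality: `∇F(v)` is the only boundary point with outer normal `v`, so its
pairing with another unit vector `u` is strictly below `F u`. The derivative of `F` along the
segment from `v` to `u` is strictly increasing. -/
lemma inner_gradient_lt (hF : IsSupportFn n F) {u v : Euc n} (hu : u ∈ USphere n)
    (hv : v ∈ USphere n) (huv : u ≠ v) : ⟪gradient F v, u⟫ < F u := by
  have hun := norm_of_mem_uSphere hu
  have hvn := norm_of_mem_uSphere hv
  have hu0 := ne_zero_of_mem_uSphere hu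
  have hv0 := ne_zero_of_mem_uSphere hv
  by_cases hneg : u = -v
  · have h1 := hF.inner_gradient_self hv0
    have h2 := hF.pos v hv
    have h3 := hF.pos u hu
    rw [hneg] at h3 ⊢
    rw [inner_neg_right, h1]
    linarith
  -- `u` and `v` are linearly independent, being distinct and not antipodal unit vectors
  have hind : ∀ a b : ℝ, a • u + b • v = 0 → a = 0 ∧ b = 0 := by
    intro a b hab
    have hab' : a • u = -(b • v) := eq_neg_of_add_eq_zero_left hab
    have hn := congrArg norm hab'
    rw [norm_neg, norm_smul, norm_smul, hun, hvn, mul_one, mul_one, Real.norm_eq_abs,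
      Real.norm_eq_abs] at hn
    by_cases ha : a = 0
    · refine ⟨ha, ?_⟩
      rw [ha, abs_zero] at hn
      exact abs_eq_zero.1 hn.symm
    · exfalso
      rcases abs_eq_abs.1 hn with h | h
      · apply hneg
        rw [← h, ← smul_neg] at hab'
        exact smul_right_injective _ ha hab'
      · apply huv
        have : a • u = a • v := by rw [hab', h, neg_smul]
        exact smul_right_injective _ ha this
  set c : ℝ → Euc n := fun t => v + t • (u - v) with hc
  have hcuv : ∀ t, c t = t • u + (1 - t) • v := by
    intro t; simp only [hc]; module
  have hc0 : ∀ t, c t ≠ 0 := by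
    intro t ht
    rw [hcuv] at ht
    obtain ⟨h1, h2⟩ := hind _ _ ht
    linarith
  have hcd : ∀ t, HasDerivAt c (u - v) t := by
    intro t
    have := ((hasDerivAt_id t).smul_const (u - v)).const_add v
    simpa [hc] using this
  have hk : ∀ t, HasDerivAt (fun s => F (c s)) ⟪gradient F (c t), u - v⟫ t := by
    intro t
    have := (hF.hasFDerivAt (hc0 t)).comp_hasDerivAt t (hcd t)
    simpa [Function.comp_def] using this
  have hk2 : ∀ t, HasDerivAt (fun s => ⟪gradient F (c s), u - v⟫)
      ⟪hessOp n F (c t) (u - v), u - v⟫ t := by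
    intro t
    have h1 := (hF.hasFDerivAt_gradient (hc0 t)).comp_hasDerivAt t (hcd t)
    have h2 := h1.inner ℝ (hasDerivAt_const t (u - v))
    simpa [Function.comp_def] using h2
  have hmono : StrictMono (fun s => ⟪gradient F (c s), u - v⟫) := by
    refine strictMono_of_deriv_pos fun t => ?_
    rw [(hk2 t).deriv, real_inner_comm]
    refine hF.hessOp_pos (hc0 t) fun a ha => ?_
    rw [hcuv] at ha
    have h0 : (1 - a * t) • u + (-1 - a * (1 - t)) • v = 0 := by
      have : (1 - a * t) • u + (-1 - a * (1 - t)) • v = (u - v) - a • (t • u + (1 - t) • v) := by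
        module
      rw [this, ha, sub_self]
    obtain ⟨h1, h2⟩ := hind _ _ h0
    have ha0 : a = 0 := by linarith
    rw [ha0] at h1
    linarith
  obtain ⟨s, hs, hs'⟩ := exists_deriv_eq_slope (fun s => F (c s)) (zero_lt_one' ℝ)
    (fun t _ => (hk t).continuousAt.continuousWithinAt)
    (fun t _ => (hk t).differentiableAt.differentiableWithinAt)
  rw [(hk s).deriv] at hs'
  have hlt := hmono hs.1
  have hc1 : c 1 = u := by simp [hc]
  have hcz : c 0 = v := by simp [hc]
  simp only [hc1, hcz] at hs' hlt
  rw [hs', inner_sub_right, hF.inner_gradient_self hv0, sub_zero, div_one] at hlt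
  linarith

lemma gradient_ne_zero (hF : IsSupportFn n F) {x : Euc n} (hx : x ∈ USphere n) :
    gradient F x ≠ 0 := by
  intro h
  have h1 := hF.inner_gradient_self (ne_zero_of_mem_uSphere hx)
  rw [h, inner_zero_left] at h1
  exact (hF.pos x hx).ne h1

lemma radTerm_eq (hF : IsSupportFn n F) {x : Euc n} (hx : x ∈ USphere n) :
    radTerm n F x = ‖gradient F x‖ := by
  have h1 := hF.inner_gradient_self (ne_zero_of_mem_uSphere hx)
  have hn := norm_of_mem_uSphere hx
  have : ‖sphGrad n F x‖ ^ 2 + F x ^ 2 = ‖gradient F x‖ ^ 2 := by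
    rw [sphGrad, norm_sub_sq_real, inner_smul_right, norm_smul, h1, hn, mul_one, Real.norm_eq_abs,
      sq_abs]
    ring
  rw [radTerm, this, Real.sqrt_sq (norm_nonneg _)]

/-- `Hess F + x ⊗ x` is positive definite; its determinant is then positive because the segment
from the identity to it consists of invertible operators. -/
lemma sphDet_pos (hF : IsSupportFn n F) {x : Euc n} (hx : x ∈ USphere n) :
    0 < sphDet n F x := by
  have hx0 := ne_zero_of_mem_uSphere hx
  have hxn := norm_of_mem_uSphere hx
  set B : Euc n →L[ℝ] Euc n := hessOp n F x + (innerSL ℝ x).smulRight x with hB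
  have hBpos : ∀ v, v ≠ 0 → 0 < ⟪v, B v⟫ := by
    intro v hv
    have e : ⟪v, B v⟫ = ⟪v, hessOp n F x v⟫ + ⟪x, v⟫ ^ 2 := by
      simp only [hB, add_apply, ContinuousLinearMap.smulRight_apply,
        innerSL_apply_apply, inner_add_right, inner_smul_right]
      rw [real_inner_comm v x]; ring
    rw [e]
    by_cases h : ∃ c : ℝ, v = c • x
    · obtain ⟨c, rfl⟩ := h
      have hc : c ≠ 0 := by rintro rfl; simp at hv
      rw [map_smul, hF.hessOp_self hx0, smul_zero, inner_zero_right, inner_smul_right,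
        real_inner_self_eq_norm_sq, hxn]
      positivity
    · push Not at h
      have := hF.hessOp_pos hx0 h
      positivity
  -- the determinant does not vanish along the segment from the identity to `B`
  set L : ℝ → (Euc n →L[ℝ] Euc n) := fun t => (1 - t) • ContinuousLinearMap.id ℝ (Euc n) + t • B
    with hL
  have hcont : Continuous fun t => (L t).det :=
    ContinuousLinearMap.continuous_det.comp (by fun_prop)
  have hne : ∀ t ∈ Icc (0 : ℝ) 1, (L t).det ≠ 0 := by
    intro t ht h0
    have hlt : ⊥ < LinearMap.ker ((L t : Euc n →L[ℝ] Euc n) : Euc n →ₗ[ℝ] Euc n) :=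
      LinearMap.bot_lt_ker_of_det_eq_zero h0
    obtain ⟨v, hv, hv0⟩ := Submodule.exists_mem_ne_zero_of_ne_bot hlt.ne'
    have hv1 : L t v = 0 := hv
    have h1 : ⟪v, L t v⟫ = (1 - t) * ‖v‖ ^ 2 + t * ⟪v, B v⟫ := by
      simp only [hL, add_apply, smul_apply,
        ContinuousLinearMap.id_apply, inner_add_right, inner_smul_right,
        real_inner_self_eq_norm_sq]
    rw [hv1, inner_zero_right] at h1
    have h2 := hBpos v hv0
    have h3 : 0 < ‖v‖ ^ 2 := by positivity
    rcases ht.1.eq_or_lt with h | h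
    · rw [← h] at h1; linarith
    · have := mul_pos h h2
      have := mul_nonneg (sub_nonneg.2 ht.2) h3.le
      linarith
  have hL0 : (L 0).det = 1 := by simp [hL, ContinuousLinearMap.det]
  have hL1 : (L 1).det = sphDet n F x := by simp [hL, hB, ContinuousLinearMap.det, sphDet]
  by_contra hle
  rw [not_lt, ← hL1] at hle
  have hmem : (0 : ℝ) ∈ Icc ((L 1).det) ((L 0).det) := ⟨hle, by rw [hL0]; norm_num⟩
  obtain ⟨t, ht, h0⟩ := intermediate_value_Icc' zero_le_one hcont.continuousOn hmem
  exact hne t ht h0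

lemma continuousOn_sphDet (hF : IsSupportFn n F) : ContinuousOn (sphDet n F) (USphere n) := by
  have h : ContinuousOn (fun x : Euc n => hessOp n F x + (innerSL ℝ x).smulRight x)
      (USphere n) := by
    refine ContinuousOn.add (fun x hx =>
      (hF.continuousAt_hessOp (ne_zero_of_mem_uSphere hx)).continuousWithinAt) ?_
    have : Continuous fun x : Euc n => (innerSL ℝ x).smulRight x := by fun_prop
    exact this.continuousOn
  exact ContinuousLinearMap.continuous_det.comp_continuousOn h

lemma continuousOn_gradient (hF : IsSupportFn n F) : ContinuousOn (gradient F) {(0 : Euc n)}ᶜ :=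
  fun _ hx => (hF.contDiffAt_gradient hx).continuousAt.continuousWithinAt

/-- The map `x ↦ ‖x‖ ∇F(x)`, which takes the unit ball onto the body with support function `F`,
is injective away from the origin. -/
lemma injOn_norm_smul_gradient (hF : IsSupportFn n F) :
    InjOn (fun x : Euc n => ‖x‖ • gradient F x) {(0 : Euc n)}ᶜ := by
  intro x hx y hy hxy
  have key : ∀ z : Euc n, z ≠ 0 → ∃ u ∈ USphere n, z = ‖z‖ • u ∧ gradient F z = gradient F u := by
    intro z hz
    have hr : 0 < ‖z‖ := norm_pos_iff.2 hz
    refine ⟨‖z‖⁻¹ • z, by simp [norm_smul, hr.ne'], by simp [smul_smul, hr.ne'], ?_⟩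
    exact (hF.gradient_smul (inv_pos.2 hr) hz).symm
  have hx' : 0 < ‖x‖ := norm_pos_iff.2 hx
  have hy' : 0 < ‖y‖ := norm_pos_iff.2 hy
  obtain ⟨u, hu, hxu, hgu⟩ := key x hx
  obtain ⟨v, hv, hyv, hgv⟩ := key y hy
  have hxy' : ‖x‖ • gradient F u = ‖y‖ • gradient F v := by
    rw [← hgu, ← hgv]; exact hxy
  by_cases huv : u = v
  · subst huv
    have h1 : ‖x‖ = ‖y‖ := by
      have := smul_left_injective ℝ (hF.gradient_ne_zero hu) hxy'
      exact this
    rw [hxu, hyv, h1]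
  · exfalso
    have h1 := hF.inner_gradient_lt hu hv huv
    have h2 := hF.inner_gradient_lt hv hu (Ne.symm huv)
    have e1 := congrArg (fun z => ⟪z, u⟫) hxy'
    have e2 := congrArg (fun z => ⟪z, v⟫) hxy'
    simp only [inner_smul_left, hF.inner_gradient_self (ne_zero_of_mem_uSphere hu),
      hF.inner_gradient_self (ne_zero_of_mem_uSphere hv), conj_trivial] at e1 e2
    have p1 := hF.pos u hu
    have p2 := hF.pos v hv
    have l1 : ‖x‖ < ‖y‖ := by
      have := mul_lt_mul_of_pos_left h1 hy'
      rw [← e1] at this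
      exact lt_of_mul_lt_mul_right this p1.le
    have l2 : ‖y‖ < ‖x‖ := by
      have := mul_lt_mul_of_pos_left h2 hx'
      rw [e2] at this
      exact lt_of_mul_lt_mul_right this p2.le
    exact lt_asymm l1 l2

end IsSupportFn

end SupportFn

/-! ### The area inequality for the radial Gauss image -/

section AreaInequality

variable {n : ℕ} {F : Euc n → ℝ}

/-- The derivative at `x` of the map `y ↦ ‖y‖ ∇F(y)`. -/
def bodyMapDeriv (n : ℕ) (F : Euc n → ℝ) (x : Euc n) : Euc n →L[ℝ] Euc n :=
  ‖x‖ • hessOp n F x + (‖x‖⁻¹ • innerSL ℝ x).smulRight (gradient F x)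

instance : IsFiniteMeasure (sphMeasure n) :=
  inferInstanceAs (IsFiniteMeasure (volume : Measure (Euc n)).toSphere)

namespace IsSupportFn

lemma hasFDerivAt_bodyMap (hF : IsSupportFn n F) {x : Euc n} (hx : x ≠ 0) :
    HasFDerivAt (fun y : Euc n => ‖y‖ • gradient F y) (bodyMapDeriv n F x) x := by
  have hnorm : HasFDerivAt (fun y : Euc n => ‖y‖) (‖x‖⁻¹ • innerSL ℝ x) x := by
    have h1 : HasFDerivAt (fun y : Euc n => ‖y‖ ^ 2) (2 • innerSL ℝ x) x :=
      (hasStrictFDerivAt_norm_sq x).hasFDerivAt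
    have h2 := h1.sqrt (pow_ne_zero 2 (norm_ne_zero_iff.2 hx))
    simp only [Real.sqrt_sq (norm_nonneg _)] at h2
    refine h2.congr_fderiv ?_
    ext v
    simp
    ring
  exact hnorm.smul (hF.hasFDerivAt_gradient hx)

/-- The Hessian plus the rank-one term `∇F(u) ⊗ u` is `Hess F + u ⊗ u` composed with the
transvection `w ↦ w + ⟪u, w⟫ (∇F(u) - u)`, whose determinant is `⟪∇F(u), u⟫ = F u`. -/
lemma det_bodyMapDeriv (hF : IsSupportFn n F) {u : Euc n} (hu : u ∈ USphere n) {r : ℝ}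
    (hr : 0 < r) : (bodyMapDeriv n F (r • u)).det = F u * sphDet n F u := by
  have hu0 := ne_zero_of_mem_uSphere hu
  have hun := norm_of_mem_uSphere hu
  have hnr : ‖r • u‖ = r := by rw [norm_smul, hun, mul_one, Real.norm_of_nonneg hr.le]
  have e1 : bodyMapDeriv n F (r • u) = hessOp n F u + (innerSL ℝ u).smulRight (gradient F u) := by
    rw [bodyMapDeriv, hnr, hF.hessOp_smul hr hu0, hF.gradient_smul hr hu0, map_smul, smul_smul,
      inv_mul_cancel₀ hr.ne', one_smul]
  have e2 : ((hessOp n F u + (innerSL ℝ u).smulRight (gradient F u) : Euc n →L[ℝ] Euc n) :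
      Euc n →ₗ[ℝ] Euc n) =
      (LinearMap.transvection ((innerSL ℝ u : Euc n →L[ℝ] ℝ) : Euc n →ₗ[ℝ] ℝ)
        (gradient F u - u)) ∘ₗ
      ((hessOp n F u + (innerSL ℝ u).smulRight u : Euc n →L[ℝ] Euc n) : Euc n →ₗ[ℝ] Euc n) := by
    refine LinearMap.ext fun v => ?_
    have h0 : ⟪u, hessOp n F u v⟫ = 0 := by
      rw [real_inner_comm]; exact hF.inner_hessOp_apply_self hu0 v
    simp only [LinearMap.comp_apply, LinearMap.transvection.apply, ContinuousLinearMap.coe_coe,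
      add_apply, ContinuousLinearMap.smulRight_apply, innerSL_apply_apply,
      inner_add_right, inner_smul_right, h0, real_inner_self_eq_norm_sq, hun]
    module
  rw [e1, ContinuousLinearMap.det, e2, LinearMap.det_comp, LinearMap.transvection.det, sphDet]
  congr 1
  simp [inner_sub_right, hun]
  rw [← inner_gradient_left, hF.inner_gradient_self hu0]

lemma continuous_sphDet (hF : IsSupportFn n F) : Continuous fun x : USphere n => sphDet n F x :=
  continuousOn_iff_continuous_domRestrict.1 hF.continuousOn_sphDet

lemma continuous_restrict (hF : IsSupportFn n F) : Continuous fun x : USphere n => F x :=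
  continuousOn_iff_continuous_domRestrict.1
    (hF.smooth.continuousOn.mono fun _ hx => ne_zero_of_mem_uSphere hx)

lemma continuous_radTerm (hF : IsSupportFn n F) :
    Continuous fun x : USphere n => radTerm n F x := by
  have h : Continuous fun x : USphere n => gradient F x :=
    continuousOn_iff_continuous_domRestrict.1
      (hF.continuousOn_gradient.mono fun _ hx => ne_zero_of_mem_uSphere hx)
  refine h.norm.congr fun x => (hF.radTerm_eq x.2).symm

lemma radTerm_pos (hF : IsSupportFn n F) {x : Euc n} (hx : x ∈ USphere n) :
    0 < radTerm n F x := by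
  rw [hF.radTerm_eq hx]; exact norm_pos_iff.2 (hF.gradient_ne_zero hx)

/-- The density of the pull-back of spherical measure under the radial Gauss image map
`x ↦ ∇F(x)/‖∇F(x)‖` has total mass at most `|S^{n-1}|`. The map `x ↦ ‖x‖ ∇F(x)` is injective,
sends `{‖x‖ ‖∇F(x)‖ < 1}` into the unit ball, and has `0`-homogeneous Jacobian `F · sphDet`, so the
inequality is the change of variables formula written in polar coordinates. -/
lemma lintegral_le_sphMeasure_univ (hn : 2 ≤ n) (hF : IsSupportFn n F) :
    ∫⁻ x : USphere n, ENNReal.ofReal (F x * sphDet n F x / radTerm n F x ^ n) ∂(sphMeasure n)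
      ≤ sphMeasure n univ := by
  set K : USphere n → ℝ := fun x => F x * sphDet n F x with hK
  have hKpos : ∀ x, 0 < K x := fun x => mul_pos (hF.pos x x.2) (hF.sphDet_pos x.2)
  have hKc : Continuous K := hF.continuous_restrict.mul hF.continuous_sphDet
  set ρ : USphere n → ℝ := fun x => radTerm n F x with hρ
  have hρpos : ∀ x, 0 < ρ x := fun x => hF.radTerm_pos x.2
  have hρc : Continuous ρ := hF.continuous_radTerm
  set G : Euc n → Euc n := fun x => ‖x‖ • gradient F x with hG
  set E : Set (Euc n) := {(0 : Euc n)}ᶜ ∩ G ⁻¹' ball 0 1 with hE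
  have hGc : ContinuousOn G {(0 : Euc n)}ᶜ := continuous_norm.continuousOn.smul
    hF.continuousOn_gradient
  have hEo : IsOpen E := hGc.isOpen_inter_preimage isOpen_compl_singleton isOpen_ball
  set J : Euc n → ENNReal := fun x => ENNReal.ofReal |(bodyMapDeriv n F x).det| with hJ
  have hvol : ∫⁻ x in E, J x ≤ volume (ball (0 : Euc n) 1) := by
    rw [hJ, lintegral_abs_det_fderiv_eq_addHaar_image volume hEo.measurableSet
      (fun x hx => (hF.hasFDerivAt_bodyMap hx.1).hasFDerivWithinAt)
      (hF.injOn_norm_smul_gradient.mono fun x hx => hx.1)]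
    refine measure_mono ?_
    rintro _ ⟨x, hx, rfl⟩
    exact hx.2
  set S : Set (USphere n × Ioi (0 : ℝ)) := {p | (p.2 : ℝ) < (ρ p.1)⁻¹} with hS
  have hSo : IsOpen S :=
    isOpen_lt (by fun_prop) ((hρc.comp continuous_fst).inv₀ fun p => (hρpos p.1).ne')
  have hind : ∀ p : USphere n × Ioi (0 : ℝ), E.indicator J ((p.2 : ℝ) • (p.1 : Euc n)) =
      S.indicator (fun p => ENNReal.ofReal (K p.1)) p := by
    rintro ⟨u, r⟩
    have hr : (0 : ℝ) < r := r.2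
    have hu0 := ne_zero_of_mem_uSphere u.2
    have hiff : ((r : ℝ) • (u : Euc n)) ∈ E ↔ ((u, r) : USphere n × Ioi (0 : ℝ)) ∈ S := by
      have hGn : ‖G ((r : ℝ) • (u : Euc n))‖ = r * ρ u := by
        simp only [hG, hρ]
        rw [hF.gradient_smul hr hu0, hF.radTerm_eq u.2, norm_smul, norm_norm, norm_smul,
          norm_of_mem_uSphere u.2, mul_one, Real.norm_of_nonneg hr.le]
      simp only [hE, hS, mem_inter_iff, mem_compl_iff, mem_singleton_iff, mem_preimage,
        mem_ball_zero_iff, mem_ofPred_eq, hGn]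
      rw [lt_inv_comm₀ hr (hρpos u), ← one_div, lt_div_iff₀' hr]
      simp [hr.ne', hu0]
    have hJ' : J ((r : ℝ) • (u : Euc n)) = ENNReal.ofReal (K u) := by
      simp only [hJ]
      rw [hF.det_bodyMapDeriv u.2 hr, abs_of_pos (hKpos u)]
    by_cases h : ((u, r) : USphere n × Ioi (0 : ℝ)) ∈ S
    · rw [indicator_of_mem h, indicator_of_mem (hiff.2 h), hJ']
    · rw [indicator_of_notMem h, indicator_of_notMem (mt hiff.1 h)]
  have hfin : Module.finrank ℝ (Euc n) = n := by simp
  have hpolar : ∫⁻ x in E, J x =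
      ∫⁻ p, S.indicator (fun p => ENNReal.ofReal (K p.1)) p
        ∂((sphMeasure n).prod (Measure.volumeIoiPow (n - 1))) := by
    have hmp := (volume : Measure (Euc n)).measurePreserving_homeomorphUnitSphereProd
    rw [hfin] at hmp
    have h1 := hmp.lintegral_comp_emb (homeomorphUnitSphereProd (Euc n)).measurableEmbedding
      (S.indicator (fun p => ENNReal.ofReal (K p.1)))
    rw [sphMeasure, ← h1]
    have h2 : ∀ x : ({(0 : Euc n)}ᶜ : Set (Euc n)),
        S.indicator (fun p => ENNReal.ofReal (K p.1)) (homeomorphUnitSphereProd (Euc n) x) =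
          E.indicator J x := by
      intro x
      rw [← hind, ← homeomorphUnitSphereProd_symm_apply_coe, Homeomorph.symm_apply_apply]
    simp_rw [h2]
    rw [lintegral_subtype_comap (measurableSet_singleton _).compl,
      setLIntegral_indicator hEo.measurableSet, inter_eq_left.2 fun x hx => hx.1]
  have hn0 : (0 : ℝ) < n := by exact_mod_cast (by omega : 0 < n)
  have hinner : ∀ u : USphere n, ∫⁻ r, S.indicator (fun p => ENNReal.ofReal (K p.1)) (u, r)
      ∂(Measure.volumeIoiPow (n - 1)) = ENNReal.ofReal (K u / ρ u ^ n / n) := by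
    intro u
    have hset : (fun r => S.indicator (fun p => ENNReal.ofReal (K p.1)) (u, r)) =
        (Iio (⟨(ρ u)⁻¹, inv_pos.2 (hρpos u)⟩ : Ioi (0 : ℝ))).indicator
          fun _ => ENNReal.ofReal (K u) := by
      ext r
      simp only [indicator, hS, mem_ofPred_eq, mem_Iio, ← Subtype.coe_lt_coe]
    rw [hset, lintegral_indicator measurableSet_Iio, setLIntegral_const,
      Measure.volumeIoiPow_apply_Iio, ← ENNReal.ofReal_mul (hKpos u).le]
    congr 1
    have h1 : n - 1 + 1 = n := by omega
    have h2 : ((n - 1 : ℕ) : ℝ) + 1 = n := by exact_mod_cast h1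
    rw [h1, h2, inv_pow]
    ring
  have hmeas : Measurable (S.indicator fun p : USphere n × Ioi (0 : ℝ) => ENNReal.ofReal (K p.1)) :=
    (ENNReal.measurable_ofReal.comp (hKc.comp continuous_fst).measurable).indicator
      hSo.measurableSet
  rw [hpolar, lintegral_prod _ hmeas.aemeasurable] at hvol
  simp_rw [hinner] at hvol
  rw [sphMeasure, Measure.toSphere_apply_univ, hfin, ← sphMeasure]
  refine le_trans (le_of_eq ?_) (mul_le_mul_right hvol (n : ENNReal))
  rw [← lintegral_const_mul' _ _ (ENNReal.natCast_ne_top n)]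
  refine lintegral_congr fun u => ?_
  rw [← ENNReal.ofReal_natCast, ← ENNReal.ofReal_mul hn0.le, mul_div_cancel₀ _ hn0.ne']

end IsSupportFn

end AreaInequality

/-! ### Monotonicity along the flow -/

section Flow

lemma hasDerivAt_of_eq_integral_Ioi {φ R : ℝ → ℝ} (hφ : ContinuousOn φ (Ioi 0))
    (hφ_pos : ∀ s ∈ Ioi (0 : ℝ), 0 < φ s)
    (hR : ∀ s ∈ Ioi (0 : ℝ), IntegrableOn (fun t => 1 / (t * φ t)) (Ioi s) ∧
      R s = ∫ t in Ioi s, 1 / (t * φ t)) {s : ℝ} (hs : s ∈ Ioi (0 : ℝ)) :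
    HasDerivAt R (-(1 / (s * φ s))) s := by
  have hs0 : (0 : ℝ) < s := hs
  have hc : ContinuousOn (fun t => 1 / (t * φ t)) (Ioi 0) :=
    continuousOn_const.div (continuousOn_id.mul hφ) fun t ht =>
      (mul_pos ht (hφ_pos t ht)).ne'
  have h1 : HasDerivAt (fun u => ∫ t in s..u, 1 / (t * φ t)) (1 / (s * φ s)) s := by
    refine intervalIntegral.integral_hasDerivAt_right (by simp) ?_ (hc.continuousAt (Ioi_mem_nhds hs0))
    exact hc.stronglyMeasurableAtFilter isOpen_Ioi _ hs
  have h2 : HasDerivAt (fun u => R s - ∫ t in s..u, 1 / (t * φ t)) (-(1 / (s * φ s))) s :=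
    h1.const_sub (R s)
  refine h2.congr_of_eventuallyEq ?_
  filter_upwards [Ioi_mem_nhds hs0] with u hu
  have h3 := intervalIntegral.integral_interval_add_Ioi (hR s hs).1 (hR u hu).1
  rw [(hR s hs).2, (hR u hu).2, ← h3]
  ring

variable {n : ℕ} {f : Euc n → ℝ} {φ R : ℝ → ℝ} {T : ℝ} {H : ℝ → Euc n → ℝ}

namespace IsFlowSol

lemma continuous_uncurry {J : Set ℝ} (hH : IsFlowSol n f φ J H) :
    Continuous fun p : J × USphere n => H p.1 p.2 :=
  hH.smooth.continuousOn.comp_continuous (f := fun p : J × USphere n => ((p.1 : ℝ), (p.2 : Euc n)))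
    (by fun_prop) fun p => ⟨p.1.2, ne_zero_of_mem_uSphere p.2.2⟩

end IsFlowSol

lemma continuous_restrict_uSphere {f : Euc n → ℝ} (hf : ContinuousOn f {(0 : Euc n)}ᶜ) :
    Continuous fun x : USphere n => f x :=
  hf.comp_continuous continuous_subtype_val fun x => ne_zero_of_mem_uSphere x.2

lemma integrable_of_continuous_uSphere {g : USphere n → ℝ} (hg : Continuous g) :
    Integrable g (sphMeasure n) := by
  rw [← integrableOn_univ]
  exact hg.continuousOn.integrableOn_compact isCompact_univ

lemma continuousOn_functional (hf : ContinuousOn f {(0 : Euc n)}ᶜ)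
    (hR : ContinuousOn R (Ioi 0)) (hH : IsFlowSol n f φ (Ico 0 T) H) :
    ContinuousOn (fun t => sphInt n (fun x => R (1 / H t x) * f x)) (Ico 0 T) := by
  rw [continuousOn_iff_continuous_domRestrict]
  have hpos : ∀ p : Ico (0 : ℝ) T × USphere n, 0 < H p.1 p.2 := fun p =>
    (hH.body p.1 p.1.2).pos p.2 p.2.2
  have h1 : Continuous fun p : Ico (0 : ℝ) T × USphere n => R (1 / H p.1 p.2) :=
    hR.comp_continuous (continuous_const.div hH.continuous_uncurry fun p => (hpos p).ne')
      fun p => one_div_pos.2 (hpos p)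
  have h2 : Continuous (Function.uncurry fun (t : Ico (0 : ℝ) T) (x : USphere n) =>
      R (1 / H t x) * f x) :=
    h1.mul ((continuous_restrict_uSphere hf).comp continuous_snd)
  have hloc : LocallyCompactSpace (Ico (0 : ℝ) T) :=
    (isClosed_Ici.isLocallyClosed.inter isOpen_Iio.isLocallyClosed).locallyCompactSpace
  have := continuous_parametric_integral_of_continuous (μ := sphMeasure n) h2
    (isCompact_univ (X := USphere n))
  simp only [Measure.restrict_univ] at this
  exact this

/-- The time derivative of `H`, read off from the joint Fréchet derivative, is jointly continuous
on the interior of the time interval. -/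
lemma IsFlowSol.exists_timeDeriv (hH : IsFlowSol n f φ (Ico 0 T) H) :
    ∃ d : ℝ → Euc n → ℝ,
      ContinuousOn (fun p : ℝ × Euc n => d p.1 p.2) (Ioo 0 T ×ˢ {(0 : Euc n)}ᶜ) ∧
      ∀ t ∈ Ioo (0 : ℝ) T, ∀ x : Euc n, x ≠ 0 → HasDerivAt (fun s => H s x) (d t x) t := by
  set U : Set (ℝ × Euc n) := Ioo 0 T ×ˢ {(0 : Euc n)}ᶜ with hU
  have hUo : IsOpen U := isOpen_Ioo.prod isOpen_compl_singleton
  have hsm : ContDiffOn ℝ (⊤ : ℕ∞) (fun p : ℝ × Euc n => H p.1 p.2) U :=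
    hH.smooth.mono (prod_mono Ioo_subset_Ico_self Subset.rfl)
  refine ⟨fun t x => fderiv ℝ (fun p : ℝ × Euc n => H p.1 p.2) (t, x) (1, 0), ?_, ?_⟩
  · exact (hsm.continuousOn_fderiv_of_isOpen hUo (by simp)).clm_apply continuousOn_const
  · intro t ht x hx
    have h1 : HasFDerivAt (fun p : ℝ × Euc n => H p.1 p.2)
        (fderiv ℝ (fun p : ℝ × Euc n => H p.1 p.2) (t, x)) (t, x) :=
      ((hsm.contDiffAt (hUo.mem_nhds (mk_mem_prod ht (mem_compl_singleton_iff.2 hx)))).differentiableAt (by simp)).hasFDerivAt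
    exact h1.comp_hasDerivAt (f := fun s : ℝ => (s, x)) t
      ((hasDerivAt_id t).prodMk (hasDerivAt_const t x))

/-- The integral of the pointwise time derivative of the functional is nonpositive. With
`g = f/φ(1/h)`, `k = h sphDet/radTerm^n` and `c = (∫ g)/|S^{n-1}| = 1/η`, the integrand
`g - η g²/k` is at most `c k - g` (arithmetic-geometric mean), and `∫ k ≤ |S^{n-1}|`. -/
lemma integral_flow_nonpos (hn : 2 ≤ n) (hf : ContinuousOn f {(0 : Euc n)}ᶜ)
    (hf_pos : ∀ x ∈ USphere n, 0 < f x) (hφ : ContinuousOn φ (Ioi 0))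
    (hφ_pos : ∀ s ∈ Ioi (0 : ℝ), 0 < φ s) {h : Euc n → ℝ} (hh : IsSupportFn n h)
    {D : USphere n → ℝ} (hD : Integrable D (sphMeasure n))
    (hDeq : ∀ x : USphere n, D x =
      f x * ((h x - flowEta n f φ h * f x * radTerm n h x ^ n / (φ (1 / h x) * sphDet n h x)) /
        (h x * φ (1 / h x)))) :
    ∫ x, D x ∂(sphMeasure n) ≤ 0 := by
  have hhpos : ∀ x : USphere n, 0 < h x := fun x => hh.pos x x.2
  have hφp : ∀ x : USphere n, 0 < φ (1 / h x) := fun x => hφ_pos _ (one_div_pos.2 (hhpos x))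
  have hdet : ∀ x : USphere n, 0 < sphDet n h x := fun x => hh.sphDet_pos x.2
  have hrad : ∀ x : USphere n, 0 < radTerm n h x := fun x => hh.radTerm_pos x.2
  set g : USphere n → ℝ := fun x => f x / φ (1 / h x) with hg
  set k : USphere n → ℝ := fun x => h x * sphDet n h x / radTerm n h x ^ n with hk
  have hgpos : ∀ x, 0 < g x := fun x => div_pos (hf_pos x x.2) (hφp x)
  have hkpos : ∀ x, 0 < k x := fun x =>
    div_pos (mul_pos (hhpos x) (hdet x)) (pow_pos (hrad x) n)
  have hgc : Continuous g := (continuous_restrict_uSphere hf).div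
    (hφ.comp_continuous (continuous_const.div hh.continuous_restrict fun x => (hhpos x).ne')
      fun x => one_div_pos.2 (hhpos x)) fun x => (hφp x).ne'
  have hkc : Continuous k := (hh.continuous_restrict.mul hh.continuous_sphDet).div
    (hh.continuous_radTerm.pow n) fun x => (pow_pos (hrad x) n).ne'
  have hgi := integrable_of_continuous_uSphere hgc
  have hki := integrable_of_continuous_uSphere hkc
  have hne : NeZero (sphMeasure n) := by
    have : Nontrivial (Euc n) :=
      Module.nontrivial_of_finrank_pos (R := ℝ) (by simp; omega)
    exact ⟨(volume : Measure (Euc n)).toSphere_ne_zero⟩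
  have hA : 0 < sphArea n :=
    ENNReal.toReal_pos (by simpa using hne.out) (measure_ne_top _ _)
  have hI : 0 < ∫ x, g x ∂(sphMeasure n) := by
    rw [integral_pos_iff_support_of_nonneg (fun x => (hgpos x).le) hgi]
    have : Function.support g = univ := eq_univ_of_forall fun x => (hgpos x).ne'
    rw [this]
    exact Measure.measure_univ_pos.2 hne.out
  have hkA : ∫ x, k x ∂(sphMeasure n) ≤ sphArea n := by
    rw [integral_eq_lintegral_of_nonneg_ae (Eventually.of_forall fun x => (hkpos x).le)
      hkc.aestronglyMeasurable]
    exact ENNReal.toReal_mono (measure_ne_top _ _) (hh.lintegral_le_sphMeasure_univ hn)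
  set I : ℝ := ∫ x, g x ∂(sphMeasure n) with hIdef
  have hη : flowEta n f φ h = sphArea n / I := rfl
  set c : ℝ := I / sphArea n with hc
  have hcpos : 0 < c := div_pos hI hA
  have hpt : ∀ x, D x ≤ c * k x - g x := by
    intro x
    have e : D x = g x - g x ^ 2 / (c * k x) := by
      rw [hDeq, hη]
      simp only [hg, hk, hc]
      have h1 := (hhpos x).ne'
      have h2 := (hφp x).ne'
      have h3 := (hdet x).ne'
      have h4 := (hrad x).ne'
      field_simp
    have hck : 0 < c * k x := mul_pos hcpos (hkpos x)
    have hsq : 0 ≤ (c * k x - g x) ^ 2 / (c * k x) := by positivity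
    have e2 : ∀ y : ℝ, 0 < y → (y - g x) ^ 2 / y = y - 2 * g x + g x ^ 2 / y := by
      intro y hy
      field_simp
      ring
    have e3 := e2 _ hck
    rw [e]
    linarith
  calc ∫ x, D x ∂(sphMeasure n) ≤ ∫ x, (c * k x - g x) ∂(sphMeasure n) :=
        integral_mono hD ((hki.const_mul c).sub hgi) hpt
    _ = c * ∫ x, k x ∂(sphMeasure n) - I := by
        rw [integral_sub (hki.const_mul c) hgi, integral_const_mul]
    _ ≤ c * sphArea n - I := by gcongr
    _ = 0 := by rw [hc, div_mul_cancel₀ _ hA.ne', sub_self]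

/-- Differentiation of the functional under the integral sign at an interior time. -/
lemma exists_hasDerivAt_nonpos (hn : 2 ≤ n) (hf : ContinuousOn f {(0 : Euc n)}ᶜ)
    (hf_pos : ∀ x ∈ USphere n, 0 < f x) (hφ : ContinuousOn φ (Ioi 0))
    (hφ_pos : ∀ s ∈ Ioi (0 : ℝ), 0 < φ s)
    (hRd : ∀ s ∈ Ioi (0 : ℝ), HasDerivAt R (-(1 / (s * φ s))) s)
    (hH : IsFlowSol n f φ (Ico 0 T) H) {t : ℝ} (ht : t ∈ Ioo (0 : ℝ) T) :
    ∃ D ≤ (0 : ℝ), HasDerivAt (fun t => sphInt n (fun x => R (1 / H t x) * f x)) D t := by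
  obtain ⟨d, hdc, hd⟩ := hH.exists_timeDeriv
  have hsub : Ioo (0 : ℝ) T ⊆ Ico 0 T := Ioo_subset_Ico_self
  have hHpos : ∀ s ∈ Ioo (0 : ℝ) T, ∀ x : USphere n, 0 < H s x := fun s hs x =>
    (hH.body s (hsub hs)).pos x x.2
  have hφp : ∀ s ∈ Ioo (0 : ℝ) T, ∀ x : USphere n, 0 < φ (1 / H s x) := fun s hs x =>
    hφ_pos _ (one_div_pos.2 (hHpos s hs x))
  set F' : ℝ → USphere n → ℝ := fun s x => f x * (d s x / (H s x * φ (1 / H s x))) with hF'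
  have hF'd : ∀ s ∈ Ioo (0 : ℝ) T, ∀ x : USphere n,
      HasDerivAt (fun s => R (1 / H s x) * f x) (F' s x) s := by
    intro s hs x
    have hp := hHpos s hs x
    have hq := hφp s hs x
    have h1 := (hd s hs x (ne_zero_of_mem_uSphere x.2)).inv hp.ne'
    have h2 : HasDerivAt R (-(1 / (1 / H s x * φ (1 / H s x)))) (H s x)⁻¹ := by
      rw [← one_div]; exact hRd _ (one_div_pos.2 hp)
    have h3 := (h2.comp s h1).mul_const (f x)
    have hfun : (fun s => R (1 / H s x) * f x) =
        fun s => (R ∘ (fun s => H s (x : Euc n))⁻¹) s * f x := by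
      ext s; simp
    rw [hfun]
    refine h3.congr_deriv ?_
    simp only [hF']
    have := hp.ne'
    have := hq.ne'
    field_simp
  have hF'c : ContinuousOn (fun p : ℝ × USphere n => F' p.1 p.2) (Ioo 0 T ×ˢ univ) := by
    have hm : ContinuousOn (fun p : ℝ × USphere n => (p.1, (p.2 : Euc n))) (Ioo 0 T ×ˢ univ) :=
      Continuous.continuousOn (by fun_prop)
    have hm1 : MapsTo (fun p : ℝ × USphere n => (p.1, (p.2 : Euc n))) (Ioo 0 T ×ˢ univ)
        (Ioo 0 T ×ˢ {(0 : Euc n)}ᶜ) := fun p hp => ⟨hp.1, ne_zero_of_mem_uSphere p.2.2⟩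
    have hdc' := hdc.comp hm hm1
    have hHc : ContinuousOn (fun p : ℝ × USphere n => H p.1 p.2) (Ioo 0 T ×ˢ univ) :=
      hH.smooth.continuousOn.comp hm fun p hp => ⟨hsub hp.1, ne_zero_of_mem_uSphere p.2.2⟩
    have hφc : ContinuousOn (fun p : ℝ × USphere n => φ (1 / H p.1 p.2)) (Ioo 0 T ×ˢ univ) :=
      hφ.comp (continuousOn_const.div hHc fun p hp => (hHpos _ hp.1 _).ne')
        fun p hp => one_div_pos.2 (hHpos _ hp.1 _)
    refine ((continuous_restrict_uSphere hf).comp continuous_snd).continuousOn.mul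
      (hdc'.div (hHc.mul hφc) fun p hp => (mul_pos (hHpos _ hp.1 _) (hφp _ hp.1 _)).ne')
  have hF'ct : Continuous (F' t) :=
    hF'c.comp_continuous (f := fun x : USphere n => (t, x)) (by fun_prop) fun x => ⟨ht, trivial⟩
  have hFc : ∀ s ∈ Ioo (0 : ℝ) T, Continuous fun x : USphere n => R (1 / H s x) * f x := by
    intro s hs
    have hR : ContinuousOn R (Ioi 0) := fun s hs => (hRd s hs).continuousAt.continuousWithinAt
    refine Continuous.mul ?_ (continuous_restrict_uSphere hf)
    exact hR.comp_continuous (continuous_const.div (hH.body s (hsub hs)).continuous_restrict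
      fun x => (hHpos s hs x).ne') fun x => one_div_pos.2 (hHpos s hs x)
  -- a compact neighbourhood of `t` on which the derivative is uniformly bounded
  obtain ⟨a, ha0, hat⟩ := exists_between ht.1
  obtain ⟨b, hbt, hbT⟩ := exists_between ht.2
  have hIcc : Icc a b ⊆ Ioo 0 T := fun s hs => ⟨ha0.trans_le hs.1, hs.2.trans_lt hbT⟩
  obtain ⟨C, hC⟩ := (isCompact_Icc.prod (isCompact_univ (X := USphere n))).exists_bound_of_continuousOn
    (hF'c.mono (prod_mono hIcc Subset.rfl))
  obtain ⟨hint, hder⟩ := hasDerivAt_integral_of_dominated_loc_of_deriv_le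
    (μ := sphMeasure n) (F := fun s (x : USphere n) => R (1 / H s x) * f x) (F' := F')
    (bound := fun _ => C) (Icc_mem_nhds hat hbt)
    (by
      filter_upwards [Ioo_mem_nhds ht.1 ht.2] with s hs
      exact (hFc s hs).aestronglyMeasurable)
    (integrable_of_continuous_uSphere (hFc t ht)) hF'ct.aestronglyMeasurable
    (Eventually.of_forall fun x s hs => hC (s, x) ⟨hs, trivial⟩) (integrable_const C)
    (Eventually.of_forall fun x s hs => hF'd s (hIcc hs) x)
  refine ⟨_, ?_, hder⟩
  refine integral_flow_nonpos hn hf hf_pos hφ hφ_pos (hH.body t (hsub ht)) hint fun x => ?_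
  have heq := (hH.eqn t (hsub ht) x x.2).hasDerivAt (Ico_mem_nhds ht.1 ht.2)
  simp only [hF']
  rw [(hd t ht x (ne_zero_of_mem_uSphere x.2)).unique heq]

end Flow

/-- the functional `P` is non-increasing along the flow when
`ℜ(s) = ∫ₛ^∞ dt/(t φ(t))`. -/
theorem P_nonincreasing
    (n : ℕ) (hn : 2 ≤ n)
    (f : Euc n → ℝ) (φ : ℝ → ℝ) (T : ℝ) (hT : 0 < T)
    (hf_smooth : ContDiffOn ℝ (⊤ : ℕ∞) f {(0 : Euc n)}ᶜ)
    (hf_pos : ∀ x ∈ USphere n, 0 < f x)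
    (hφ_smooth : ContDiffOn ℝ (⊤ : ℕ∞) φ (Ioi 0))
    (hφ_pos : ∀ s ∈ Ioi (0 : ℝ), 0 < φ s)
    (R : ℝ → ℝ)
    (hR : ∀ s ∈ Ioi (0 : ℝ), IntegrableOn (fun t => 1 / (t * φ t)) (Ioi s) ∧
      R s = ∫ t in Ioi s, 1 / (t * φ t))
    (H : ℝ → Euc n → ℝ) (hH : IsFlowSol n f φ (Ico 0 T) H) :
    AntitoneOn (fun t => sphInt n (fun x => R (1 / H t x) * f x)) (Ico 0 T) := by
  have hRd : ∀ s ∈ Ioi (0 : ℝ), HasDerivAt R (-(1 / (s * φ s))) s := fun s hs =>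
    hasDerivAt_of_eq_integral_Ioi hφ_smooth.continuousOn hφ_pos hR hs
  have hint : interior (Ico (0 : ℝ) T) = Ioo 0 T := interior_Ico
  have hderiv : ∀ t ∈ Ioo (0 : ℝ) T, ∃ D ≤ (0 : ℝ),
      HasDerivAt (fun t => sphInt n (fun x => R (1 / H t x) * f x)) D t := fun t ht =>
    exists_hasDerivAt_nonpos hn hf_smooth.continuousOn hf_pos hφ_smooth.continuousOn hφ_pos hRd hH ht
  refine antitoneOn_of_deriv_nonpos (convex_Ico 0 T) ?_ ?_ ?_
  · exact continuousOn_functional hf_smooth.continuousOn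
      (fun s hs => (hRd s hs).continuousAt.continuousWithinAt) hH
  · rw [hint]
    intro t ht
    obtain ⟨D, -, hD⟩ := hderiv t ht
    exact hD.differentiableAt.differentiableWithinAt
  · rw [hint]
    intro t ht
    obtain ⟨D, hD0, hD⟩ := hderiv t ht
    rw [hD.deriv]
    exact hD0
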